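/- arXiv:2601.18930 — 6 statements merged into one kernel-verified Lean document; each statement's English description precedes it below -/
import Mathlib

section
/- Let n ≥ 1 and let T be an n×n real matrix in which every row is all zeros except for a single entry equal to 1, i.e., there is a function f : Fin n → Fin n such that T i j = 1 if j = f i and T i j = 0 otherwise. Let p be a real number with 0 ≤ p < 1 and p ≠ 1/2. Then the matrix p • T + (1 − p) • 1 (where 1 is the n×n identity matrix) is nonsingular, i.e., its determinant is nonzero. -/
/-!
A kernel vector `v` of `p • T + (1 - p) • 1` satisfies `p * v (f i) = -(1 - p) * v i` for all `i`.
If `p = 0` this says `v = 0`. Otherwise `|v (f i)| = c * |v i|` with `c = (1 - p) / p`, so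
`|v (f^[k] i)| = c ^ k * |v i|`. Since `c > 0` and `c ≠ 1` (as `p ≠ 1 / 2`), the powers of `c` are
distinct, so `v i ≠ 0` would make the orbit of `i` under `f` infinite, which is impossible
in `Fin n`.
-/

theorem stmt_0 (n : ℕ) (hn : 1 ≤ n) (f : Fin n → Fin n)
    (T : Matrix (Fin n) (Fin n) ℝ)
    (hT : ∀ i j, T i j = if j = f i then 1 else 0)
    (p : ℝ) (hp0 : 0 ≤ p) (hp1 : p < 1) (hp : p ≠ 1 / 2) :
    (p • T + (1 - p) • (1 : Matrix (Fin n) (Fin n) ℝ)).det ≠ 0 := by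
  intro hdet
  obtain ⟨v, hv, hker⟩ := Matrix.exists_mulVec_eq_zero_iff.mpr hdet
  have hrel : ∀ i, p * v (f i) + (1 - p) * v i = 0 := by
    intro i
    have hTv : (T.mulVec v) i = v (f i) := by
      simp [Matrix.mulVec, dotProduct, hT]
    have h := congrFun hker i
    simpa [Matrix.add_mulVec, Matrix.smul_mulVec, hTv] using h
  obtain ⟨i, hi⟩ := Function.ne_iff.mp hv
  rcases hp0.eq_or_lt with rfl | hpos
  · exact hi (by simpa using hrel i)
  have hc0 : 0 < (1 - p) / p := div_pos (by linarith) hpos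
  have hc1 : (1 - p) / p ≠ 1 := by
    intro h
    rw [div_eq_one_iff_eq hpos.ne'] at h
    exact hp (by linarith)
  have hstep : ∀ j, |v (f j)| = (1 - p) / p * |v j| := by
    intro j
    have h : v (f j) = -((1 - p) / p * v j) := by
      have := hrel j
      field_simp
      linarith
    rw [h, abs_neg, abs_mul, abs_of_pos hc0]
  have horbit : ∀ k : ℕ, |v (f^[k] i)| = ((1 - p) / p) ^ k * |v i| := by
    intro k
    induction k with
    | zero => simp
    | succ k ih => rw [Function.iterate_succ_apply', hstep, ih]; ring
  have hinj : Function.Injective fun k : ℕ => f^[k] i := by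
    intro k m hkm
    have h : ((1 - p) / p) ^ k * |v i| = ((1 - p) / p) ^ m * |v i| := by
      rw [← horbit, ← horbit]
      exact congrArg (fun j => |v j|) hkm
    exact pow_right_injective₀ hc0 hc1 (mul_right_cancel₀ (abs_ne_zero.mpr hi) h)
  exact not_injective_infinite_finite _ hinj
end

section
/- Let n ≥ 1 and let T be an n×n matrix over ℂ in which every row is all zeros except for a single entry equal to 1, i.e., T i j = 1 if j = f i and T i j = 0 otherwise for some f : Fin n → Fin n. Then every eigenvalue λ of T (every root of the characteristic polynomial of T, equivalently every element of the spectrum of T over ℂ) satisfies λ = 0 or λ^k = 1 for some positive integer k. -/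
/-! An eigenvector `v` satisfies `v (f i) = lam * v i`, so `v (f^[k] i) = lam ^ k * v i`. Starting
from `i` with `v i ≠ 0`, two iterates of `f` at `i` coincide because `Fin n` is finite, which forces
two distinct powers of `lam` to agree.
-/

theorem stmt_1 (n : ℕ) (hn : 1 ≤ n) (f : Fin n → Fin n)
    (T : Matrix (Fin n) (Fin n) ℂ)
    (hT : ∀ i j, T i j = if j = f i then 1 else 0)
    (lam : ℂ) (hlam : (Matrix.charpoly T).IsRoot lam) :
    lam = 0 ∨ ∃ k : ℕ, 0 < k ∧ lam ^ k = 1 := by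
  rw [Polynomial.IsRoot, Matrix.eval_charpoly] at hlam
  obtain ⟨v, hv, hv0⟩ := Matrix.exists_mulVec_eq_zero_iff.mpr hlam
  have hstep : ∀ i, v (f i) = lam * v i := by
    intro i
    have h := congrFun hv0 i
    have hTv : (T.mulVec v) i = v (f i) := by
      simp [Matrix.mulVec, dotProduct, hT]
    have hsv : ((Matrix.scalar (Fin n) lam).mulVec v) i = lam * v i := by
      simp [Matrix.scalar_apply, Matrix.mulVec_diagonal]
    rw [Matrix.sub_mulVec, Pi.sub_apply, hTv, hsv, Pi.zero_apply] at h
    exact (sub_eq_zero.mp h).symm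
  obtain ⟨i, hi⟩ := Function.ne_iff.mp hv
  have hiter : ∀ k, v (f^[k] i) = lam ^ k * v i := by
    intro k
    induction k with
    | zero => simp
    | succ k ih => rw [Function.iterate_succ_apply', hstep, ih, pow_succ']; ring
  refine or_iff_not_imp_left.mpr fun h0 => ?_
  obtain ⟨a, b, hab, h⟩ := Finite.exists_ne_map_eq_of_infinite (fun k : ℕ => f^[k] i)
  have hpow : lam ^ a = lam ^ b := by
    have := congrArg v h
    simp only [hiter] at this
    exact mul_right_cancel₀ hi this
  have key : ∀ a b : ℕ, a < b → lam ^ a = lam ^ b → ∃ k : ℕ, 0 < k ∧ lam ^ k = 1 := by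
    intro a b hlt hp
    refine ⟨b - a, Nat.sub_pos_of_lt hlt, ?_⟩
    rw [pow_sub₀ _ h0 hlt.le, ← hp]
    exact mul_inv_cancel₀ (pow_ne_zero a h0)
  rcases lt_or_gt_of_ne hab with hlt | hlt
  · exact key a b hlt hpow
  · exact key b a hlt hpow.symm
end

section
/- Let m and n be finite index types and r a natural number. Let F and A be m×r real matrices of rank r, and let B and V be r×n real matrices of rank r. Suppose F * B = A * V. Then there exists an invertible r×r real matrix P such that A = F * P and P * V = B. -/
/-!
Full-rank factors are one-sided invertible: `V` and `B` have right inverses `W` and `U`, and `F`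
has a left inverse (`exists_right_inv_of_rank_eq`, transposed for `F`). The change of basis is
`P = B * W`. Multiplying `F * B = A * V` by `W` gives `F * P = A`; cancelling `F` in
`F * (P * V) = F * B` gives `P * V = B`, whence `V * U` is an inverse of `P`.
-/

/-- A real matrix of full row rank has a right inverse: its range has the dimension of the whole
target space, so it acts surjectively. -/
theorem exists_right_inv_of_rank_eq {n : Type*} [Fintype n] [DecidableEq n] {r : ℕ}
    (V : Matrix (Fin r) n ℝ) (hV : V.rank = r) : ∃ W : Matrix n (Fin r) ℝ, V * W = 1 := by
  rw [← Matrix.mulVec_surjective_iff_exists_right_inverse]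
  have h_range : LinearMap.range V.mulVecLin = ⊤ := by
    apply Submodule.eq_top_of_finrank_eq
    rw [Module.finrank_fin_fun]
    exact hV
  exact LinearMap.range_eq_top.mp h_range

theorem stmt_3 {m n : Type*} [Fintype m] [Fintype n]
    [DecidableEq m] [DecidableEq n] (r : ℕ)
    (F A : Matrix m (Fin r) ℝ) (B V : Matrix (Fin r) n ℝ)
    (hF : F.rank = r) (hA : A.rank = r) (hB : B.rank = r) (hV : V.rank = r)
    (h : F * B = A * V) :
    ∃ P : Matrix (Fin r) (Fin r) ℝ, IsUnit P ∧ A = F * P ∧ P * V = B := by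
  obtain ⟨W, hW⟩ := exists_right_inv_of_rank_eq V hV
  obtain ⟨U, hU⟩ := exists_right_inv_of_rank_eq B hB
  obtain ⟨K, hK⟩ : ∃ K : Matrix (Fin r) m ℝ, K * F = 1 := by
    obtain ⟨L, hL⟩ := exists_right_inv_of_rank_eq F.transpose (by rw [Matrix.rank_transpose, hF])
    refine ⟨L.transpose, ?_⟩
    simpa using congrArg Matrix.transpose hL
  -- `A = F * P` forces `P = B * W`: multiply `F * B = A * V` on the right by `W`.
  have hAP : F * (B * W) = A := by
    rw [← Matrix.mul_assoc, h, Matrix.mul_assoc, hW, Matrix.mul_one]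
  -- `F * (P * V) = A * V = F * B`, and `F` cancels on the left.
  have hPV : B * W * V = B := by
    have h_eq : F * (B * W * V) = F * B := by rw [← Matrix.mul_assoc, hAP, h]
    have h_cancel := congrArg (K * ·) h_eq
    simpa only [← Matrix.mul_assoc, hK, Matrix.one_mul] using h_cancel
  refine ⟨B * W, ?_, hAP.symm, hPV⟩
  -- `P * (V * U) = B * U = 1`, and a one-sided inverse of a square matrix is two-sided.
  exact IsUnit.of_mul_eq_one (V * U) (by rw [← Matrix.mul_assoc, hPV, hU])
end

section
/- Let m ≥ 1, n ≥ 1, and let d : Fin m → Fin n → ℝ (interpreted as the diagonals of m diagonal n×n observation matrices). Let μ be the surface measure on the unit sphere of the Euclidean space ℝ^m (the measure Measure.toSphere obtained from the Lebesgue measure on EuclideanSpace ℝ (Fin m)). Then for μ-almost every w in the unit sphere, the following holds: for all i, j in Fin n, the weighted sums satisfy ∑_{k} w k * d k i = ∑_{k} w k * d k j if and only if d k i = d k j for every k in Fin m. -/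
/-!
For fixed `i, j` with differing diagonal entries, the unwanted weights are exactly those orthogonal
to the nonzero vector `c = (d k i - d k j)ₖ`, i.e. those lying in the proper subspace `(ℝ ∙ c)ᗮ`.
A proper subspace `S` is Lebesgue-null and contains the cone over `S ∩ sphere 0 1`, so it meets the
sphere in a null set. Since there are finitely many pairs `(i, j)`, the exceptional set is null.
-/

open MeasureTheory

theorem ae_toSphere_notMem_submodule {E : Type*} [NormedAddCommGroup E] [NormedSpace ℝ E]
    [FiniteDimensional ℝ E] [MeasurableSpace E] [BorelSpace E] (μ : Measure E)
    [μ.IsAddHaarMeasure] (S : Submodule ℝ E) (hS : S ≠ ⊤) :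
    ∀ᵐ w : Metric.sphere (0 : E) 1 ∂μ.toSphere, (w : E) ∉ S := by
  have hmeas : MeasurableSet {w : Metric.sphere (0 : E) 1 | (w : E) ∈ S} :=
    measurable_subtype_coe S.closed_of_finiteDimensional.measurableSet
  simp only [ae_iff, not_not]
  rw [μ.toSphere_apply' hmeas]
  refine mul_eq_zero_of_right _ (measure_mono_null ?_ (Measure.addHaar_submodule μ S hS))
  rintro _ ⟨r, -, _, ⟨w, hw, rfl⟩, rfl⟩
  exact S.smul_mem r hw

theorem stmt_8 (m n : ℕ) (hm : 1 ≤ m) (hn : 1 ≤ n)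
    (d : Fin m → Fin n → ℝ) :
    ∀ᵐ (w : Metric.sphere (0 : EuclideanSpace ℝ (Fin m)) 1)
        ∂(volume : Measure (EuclideanSpace ℝ (Fin m))).toSphere,
      ∀ i j : Fin n,
        (∑ k, (w : EuclideanSpace ℝ (Fin m)) k * d k i =
            ∑ k, (w : EuclideanSpace ℝ (Fin m)) k * d k j) ↔
          ∀ k : Fin m, d k i = d k j := by
  refine ae_all_iff.2 fun i => ae_all_iff.2 fun j => ?_
  by_cases h : ∀ k, d k i = d k j
  · simp [h]
  let c : EuclideanSpace ℝ (Fin m) := WithLp.toLp 2 fun k => d k i - d k j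
  have hS : (ℝ ∙ c)ᗮ ≠ ⊤ := by
    rw [Ne, Submodule.orthogonal_eq_top_iff, Submodule.span_singleton_eq_bot]
    exact fun hc => h fun k => sub_eq_zero.1 (congrArg (fun v => v.ofLp k) hc)
  filter_upwards [ae_toSphere_notMem_submodule volume _ hS] with w hw
  refine iff_of_false (fun heq => hw ?_) h
  rw [Submodule.mem_orthogonal_singleton_iff_inner_right]
  simp [c, PiLp.inner_apply, mul_sub, Finset.sum_sub_distrib, heq]
end

section
/- Let n, k ≥ 1 and part : Fin n → Fin k. Let Q be an invertible n×n real matrix with Q i j = 0 whenever part i ≠ part j, and let R be an n×n real matrix with R * Rᵀ = 1 and R i j = 0 whenever part i ≠ part j. Let 𝟙 denote the all-ones vector in ℝ^n, let v = (Rᵀ * Q⁻¹) applied to 𝟙 (matrix–vector product), and let C = Q * R * diag(v). Then for every p in Fin k, C applied to the indicator vector of {j : part j = p} equals the indicator vector of {j : part j = p}. Consequently, for every vector x : Fin n → ℝ and every p in Fin k, ∑_{j with part j = p} (vecMul x C) j = ∑_{j with part j = p} x j. -/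
open Matrix

/-!
Let `D p` be the diagonal projection onto the coordinates of block `p`. A block-diagonal matrix
commutes with every `D p`; this applies to `Q` and `R`. Since diagonal matrices commute, `diag(v)`
sends the indicator `D p 𝟙` to `D p v`. Hence
`C (D p 𝟙) = Q R (D p v) = D p (Q R v) = D p (Q R Rᵀ Q⁻¹ 𝟙) = D p 𝟙`.
The statement on block sums follows by pairing `x` with this identity.
-/

/-- A block-diagonal matrix commutes with the coordinate projection onto each block. -/
lemma block_mul_diagonal_indicator {n k : ℕ} (part : Fin n → Fin k)
    (M : Matrix (Fin n) (Fin n) ℝ) (hM : ∀ i j, part i ≠ part j → M i j = 0) (p : Fin k) :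
    M * diagonal (fun j => if part j = p then (1 : ℝ) else 0) =
      diagonal (fun j => if part j = p then (1 : ℝ) else 0) * M := by
  ext i j
  rw [mul_diagonal, diagonal_mul]
  by_cases h : part i = part j
  · rw [h, mul_comm]
  · rw [hM i j h, zero_mul, mul_zero]

theorem stmt_11 (n k : ℕ) (hn : 1 ≤ n) (hk : 1 ≤ k)
    (part : Fin n → Fin k)
    (Q : Matrix (Fin n) (Fin n) ℝ) (hQ : IsUnit Q)
    (hQblk : ∀ i j, part i ≠ part j → Q i j = 0)
    (R : Matrix (Fin n) (Fin n) ℝ) (hR : R * Rᵀ = 1)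
    (hRblk : ∀ i j, part i ≠ part j → R i j = 0)
    (v : Fin n → ℝ) (hv : v = (Rᵀ * Q⁻¹).mulVec (fun _ => 1))
    (C : Matrix (Fin n) (Fin n) ℝ) (hC : C = Q * R * Matrix.diagonal v) :
    (∀ p : Fin k,
      C.mulVec (fun j => if part j = p then 1 else 0) =
        (fun j => if part j = p then 1 else 0)) ∧
    (∀ (x : Fin n → ℝ) (p : Fin k),
      ∑ j ∈ Finset.univ.filter (fun j => part j = p), Matrix.vecMul x C j =
        ∑ j ∈ Finset.univ.filter (fun j => part j = p), x j) := by
  have key : ∀ p : Fin k,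
      C.mulVec (fun j => if part j = p then 1 else 0) =
        (fun j => if part j = p then 1 else 0) := by
    intro p
    set e : Fin n → ℝ := fun j => if part j = p then 1 else 0 with he
    have hQe : Q * diagonal e = diagonal e * Q := block_mul_diagonal_indicator part Q hQblk p
    have hRe : R * diagonal e = diagonal e * R := block_mul_diagonal_indicator part R hRblk p
    have hve : diagonal v *ᵥ e = diagonal e *ᵥ v := by
      ext i
      rw [mulVec_diagonal, mulVec_diagonal, mul_comm]
    have hQinv : Q * Q⁻¹ = 1 := mul_nonsing_inv Q ((isUnit_iff_isUnit_det Q).mp hQ)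
    have hone : (Q * R) *ᵥ v = fun _ => 1 := by
      rw [hv, mulVec_mulVec, Matrix.mul_assoc, ← Matrix.mul_assoc R, hR, Matrix.one_mul, hQinv,
        one_mulVec]
    calc C *ᵥ e = (Q * R * diagonal e) *ᵥ v := by
          rw [hC, ← mulVec_mulVec, hve, mulVec_mulVec]
      _ = diagonal e *ᵥ ((Q * R) *ᵥ v) := by
          rw [Matrix.mul_assoc, hRe, ← Matrix.mul_assoc, hQe, Matrix.mul_assoc, mulVec_mulVec]
      _ = e := by
          rw [hone]
          ext i
          rw [mulVec_diagonal, mul_one]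
  refine ⟨key, fun x p => ?_⟩
  have hsum : ∀ y : Fin n → ℝ, ∑ j ∈ Finset.univ.filter (fun j => part j = p), y j =
      y ⬝ᵥ (fun j => if part j = p then 1 else 0) := by
    intro y
    simp [dotProduct, Finset.sum_filter]
  rw [hsum, hsum, ← dotProduct_mulVec, key]
end

section
/- Let n, k ≥ 1 and part : Fin n → Fin k. Let Q be an invertible n×n real matrix with Q i j = 0 whenever part i ≠ part j, and let R be an n×n real matrix with R * Rᵀ = 1 and R i j = 0 whenever part i ≠ part j. Let 𝟙 denote the all-ones vector in ℝ^n, let v = (Rᵀ * Q⁻¹) applied to 𝟙 (matrix–vector product), and let C = Q * R * diag(v). If v i ≠ 0 for every i, then C is invertible and C⁻¹ applied to 𝟙 equals 𝟙. -/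
open Matrix
/-! `C` is a product of three invertible matrices and fixes `𝟙`, because
`C 𝟙 = Q R v = Q (R Rᵀ) Q⁻¹ 𝟙 = 𝟙`; hence `C⁻¹` fixes `𝟙` as well. -/

theorem stmt_12 (n k : ℕ) (hn : 1 ≤ n) (hk : 1 ≤ k)
    (part : Fin n → Fin k)
    (Q : Matrix (Fin n) (Fin n) ℝ) (hQ : IsUnit Q)
    (hQblk : ∀ i j, part i ≠ part j → Q i j = 0)
    (R : Matrix (Fin n) (Fin n) ℝ) (hR : R * Rᵀ = 1)
    (hRblk : ∀ i j, part i ≠ part j → R i j = 0)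
    (v : Fin n → ℝ) (hv : v = (Rᵀ * Q⁻¹).mulVec (fun _ => 1))
    (C : Matrix (Fin n) (Fin n) ℝ) (hC : C = Q * R * Matrix.diagonal v)
    (hvne : ∀ i, v i ≠ 0) :
    IsUnit C ∧ C⁻¹.mulVec (fun _ => 1) = (fun _ => (1 : ℝ)) := by
  have hRu : IsUnit R := IsUnit.of_mul_eq_one _ hR
  have hCu : IsUnit C := by
    rw [hC]
    refine (hQ.mul hRu).mul ?_
    rw [Matrix.isUnit_diagonal, Pi.isUnit_iff]
    exact fun i => (hvne i).isUnit
  have hQdet : IsUnit Q.det := (Matrix.isUnit_iff_isUnit_det Q).mp hQ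
  have hCdet : IsUnit C.det := (Matrix.isUnit_iff_isUnit_det C).mp hCu
  -- `diag(v) 𝟙 = v`, so `C 𝟙 = Q R v = Q (R Rᵀ) Q⁻¹ 𝟙 = 𝟙`.
  have hC1 : C.mulVec (fun _ => 1) = (fun _ => (1 : ℝ)) := by
    have hd : (Matrix.diagonal v).mulVec (fun _ => 1) = v := by
      ext i
      simp [Matrix.mulVec_diagonal]
    have hQR : Q * R * (Rᵀ * Q⁻¹) = 1 := by
      rw [Matrix.mul_assoc, ← Matrix.mul_assoc R, hR, Matrix.one_mul,
        Matrix.mul_nonsing_inv Q hQdet]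
    rw [hC, ← Matrix.mulVec_mulVec, hd, hv, Matrix.mulVec_mulVec, hQR, Matrix.one_mulVec]
  refine ⟨hCu, ?_⟩
  calc C⁻¹.mulVec (fun _ => 1) = C⁻¹.mulVec (C.mulVec (fun _ => 1)) := by rw [hC1]
    _ = fun _ => 1 := by
      rw [Matrix.mulVec_mulVec, Matrix.nonsing_inv_mul C hCdet, Matrix.one_mulVec]
end
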